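/- Let ρ ≥ 0 and let α ∈ (0, 3/4). There exists a constant C > 0 (depending only on ρ and α) such that for all s, t, t̄ with 0 ≤ s < t ≤ t̄ and all x ∈ [0,1], ∫ₛᵗ ∫₀¹ (H_{t−θ}(x,r) − H_{t̄−θ}(x,r))² · (θ − s)^{−1/2} dr dθ ≤ C · |t − t̄|^{α} / √(t − s). -/

import Mathlib

open Real MeasureTheory

/-- The Green's function of `-∂_x⁴ + ρ∂_x²` on `[0,1]` with Neumann boundary conditions:
`H_t(x,y) = 1 + 2 ∑_{k=1}^∞ e^{-(k⁴π⁴ + ρk²π²)t} cos(kπx) cos(kπy)`. -/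
noncomputable def Hker (ρ t x y : ℝ) : ℝ :=
  1 + 2 * ∑' k : ℕ,
      Real.exp (-(((k + 1 : ℝ) ^ 4 * π ^ 4 + ρ * (k + 1 : ℝ) ^ 2 * π ^ 2) * t)) *
        Real.cos ((k + 1 : ℝ) * π * x) * Real.cos ((k + 1 : ℝ) * π * y)

/-!
Write `λ_k` for the eigenvalues; all of them are positive as soon as `ρ > -π²`. By Parseval's
identity for the cosine system on `[0,1]`, the inner integral without its weight is
`2 ∑_k (e^{-λ_k(t-θ)} - e^{-λ_k(t'-θ)})² cos²(kπx)`, so it suffices to bound the weighted time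
integral of each mode. Since `(1 - e^{-u})² ≤ u^α`, the squared difference is at most
`(λ_k (t' - t))^α e^{-2λ_k(t-θ)}`. On each half of `[s,t]` one of the two factors of
`e^{-l(t-θ)} (θ-s)^{-β}` is at most its value at the midpoint, so the integral of this product is
`O(l⁻¹ (t-s)^{-β})`. The sum `∑_k λ_k^{α-1}` that remains converges because `λ_k ≳ k⁴` and
`4(1 - α) > 1`; as `λ_k` increases with `ρ`, its bound is uniform in `ρ ≥ ρ₀ > -π²`.
-/

section ExponentialBounds

variable {u l α : ℝ}

lemma exp_neg_le_inv (hu : 0 < u) : exp (-u) ≤ u⁻¹ := by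
  rw [exp_neg]
  gcongr
  linarith [add_one_le_exp u]

lemma sq_one_sub_exp_neg_le_rpow (hu : 0 ≤ u) (hα0 : 0 ≤ α) (hα2 : α ≤ 2) :
    (1 - exp (-u)) ^ 2 ≤ u ^ α := by
  have hnonneg : 0 ≤ 1 - exp (-u) := sub_nonneg.2 (exp_le_one_iff.2 (neg_nonpos.2 hu))
  rcases le_total u 1 with hu1 | hu1
  · calc (1 - exp (-u)) ^ 2 ≤ u ^ 2 := by
          gcongr
          linarith [add_one_le_exp (-u)]
      _ = u ^ (2 : ℝ) := (rpow_two u).symm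
      _ ≤ u ^ α := rpow_le_rpow_of_exponent_ge' hu hu1 hα0 hα2
  · calc (1 - exp (-u)) ^ 2 ≤ 1 := pow_le_one₀ hnonneg (by linarith [exp_pos (-u)])
      _ ≤ u ^ α := one_le_rpow hu1 hα0

lemma sq_exp_sub_exp_le {τ τ' : ℝ} (hl : 0 ≤ l) (hτ : τ ≤ τ') (hα0 : 0 ≤ α) (hα2 : α ≤ 2) :
    (exp (-(l * τ)) - exp (-(l * τ'))) ^ 2 ≤ (l * (τ' - τ)) ^ α * exp (-(2 * l * τ)) := by
  have hfactor : exp (-(l * τ')) = exp (-(l * τ)) * exp (-(l * (τ' - τ))) := by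
    rw [← exp_add]
    ring_nf
  have hsquare : exp (-(2 * l * τ)) = exp (-(l * τ)) ^ 2 := by
    rw [sq, ← exp_add]
    ring_nf
  calc (exp (-(l * τ)) - exp (-(l * τ'))) ^ 2
      = (1 - exp (-(l * (τ' - τ)))) ^ 2 * exp (-(2 * l * τ)) := by
        rw [hfactor, hsquare]
        ring
    _ ≤ (l * (τ' - τ)) ^ α * exp (-(2 * l * τ)) := by
        gcongr
        exact sq_one_sub_exp_neg_le_rpow (mul_nonneg hl (sub_nonneg.2 hτ)) hα0 hα2

end ExponentialBounds

section TimeIntegral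

variable {l T α β : ℝ}

lemma exp_mul_rpow_neg_le_add {u : ℝ} (hl : 0 ≤ l) (hT : 0 < T) (hβ : 0 ≤ β) (hu : 0 < u) :
    exp (-(l * (T - u))) * u ^ (-β) ≤
      (T / 2) ^ (-β) * exp (-(l * (T - u))) + exp (-(l * (T / 2))) * u ^ (-β) := by
  rcases le_total (T / 2) u with hTu | huT
  · have hrpow : u ^ (-β) ≤ (T / 2) ^ (-β) :=
      rpow_le_rpow_of_nonpos (by positivity) hTu (by linarith)
    calc exp (-(l * (T - u))) * u ^ (-β)
        ≤ (T / 2) ^ (-β) * exp (-(l * (T - u))) := by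
          rw [mul_comm]
          gcongr
      _ ≤ _ := le_add_of_nonneg_right (by positivity)
  · have hexp : exp (-(l * (T - u))) ≤ exp (-(l * (T / 2))) := by
      gcongr
      linarith
    calc exp (-(l * (T - u))) * u ^ (-β) ≤ exp (-(l * (T / 2))) * u ^ (-β) := by gcongr
      _ ≤ _ := le_add_of_nonneg_left (by positivity)

lemma integral_exp_neg_mul_sub_le (hl : 0 < l) :
    ∫ u in (0 : ℝ)..T, exp (-(l * (T - u))) ≤ l⁻¹ := by
  have hvalue : ∫ u in (0 : ℝ)..T, exp (-(l * (T - u))) = l⁻¹ * (1 - exp (-(l * T))) := by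
    have hsub := intervalIntegral.integral_comp_mul_sub (a := 0) (b := T) exp hl.ne' (l * T)
    calc ∫ u in (0 : ℝ)..T, exp (-(l * (T - u)))
        = ∫ u in (0 : ℝ)..T, exp (l * u - l * T) := by
          congr! 3
          ring
      _ = l⁻¹ * (1 - exp (-(l * T))) := by simpa using hsub
  rw [hvalue]
  exact mul_le_of_le_one_right (by positivity) (by linarith [exp_pos (-(l * T))])

lemma integral_exp_mul_rpow_neg_le (hl : 0 < l) (hT : 0 < T) (hβ0 : 0 ≤ β) (hβ1 : β < 1) :
    ∫ u in (0 : ℝ)..T, exp (-(l * (T - u))) * u ^ (-β) ≤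
      (2 ^ β + 2 / (1 - β)) * l⁻¹ * T ^ (-β) := by
  have hβ : 0 < 1 - β := sub_pos.2 hβ1
  have hint_exp : IntervalIntegrable (fun u ↦ exp (-(l * (T - u)))) volume 0 T :=
    Continuous.intervalIntegrable (by fun_prop) _ _
  have hint_rpow : IntervalIntegrable (fun u : ℝ ↦ u ^ (-β)) volume 0 T :=
    intervalIntegral.intervalIntegrable_rpow' (by linarith)
  have hrpow : ∫ u in (0 : ℝ)..T, u ^ (-β) = T * T ^ (-β) / (1 - β) := by
    rw [integral_rpow (Or.inl (by linarith)), zero_rpow (by linarith), rpow_add_one hT.ne']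
    ring
  calc ∫ u in (0 : ℝ)..T, exp (-(l * (T - u))) * u ^ (-β)
      ≤ ∫ u in (0 : ℝ)..T,
          ((T / 2) ^ (-β) * exp (-(l * (T - u))) + exp (-(l * (T / 2))) * u ^ (-β)) :=
        intervalIntegral.integral_mono_on_of_le_Ioo hT.le
          (hint_rpow.continuousOn_mul (by fun_prop))
          ((hint_exp.const_mul _).add (hint_rpow.const_mul _))
          fun u hu ↦ exp_mul_rpow_neg_le_add hl.le hT hβ0 hu.1
    _ = (T / 2) ^ (-β) * (∫ u in (0 : ℝ)..T, exp (-(l * (T - u)))) +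
          exp (-(l * (T / 2))) * (T * T ^ (-β) / (1 - β)) := by
        rw [intervalIntegral.integral_add (hint_exp.const_mul _) (hint_rpow.const_mul _),
          intervalIntegral.integral_const_mul, intervalIntegral.integral_const_mul, hrpow]
    _ ≤ (T / 2) ^ (-β) * l⁻¹ + (l * (T / 2))⁻¹ * (T * T ^ (-β) / (1 - β)) := by
        gcongr
        · exact integral_exp_neg_mul_sub_le hl
        · exact exp_neg_le_inv (by positivity)
    _ = (2 ^ β + 2 / (1 - β)) * l⁻¹ * T ^ (-β) := by
        rw [div_rpow hT.le zero_le_two, rpow_neg zero_le_two]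
        field_simp

variable {s t t' : ℝ}

lemma intervalIntegrable_sq_exp_sub_exp_mul_rpow_neg (hβ : β < 1) :
    IntervalIntegrable
      (fun θ ↦ (exp (-(l * (t - θ))) - exp (-(l * (t' - θ)))) ^ 2 * (θ - s) ^ (-β))
      volume s t := by
  have hweight : IntervalIntegrable (fun θ ↦ (θ - s) ^ (-β)) volume s t := by
    simpa using (intervalIntegral.intervalIntegrable_rpow' (a := 0) (b := t - s)
      (neg_lt_neg hβ)).comp_sub_right s
  exact hweight.continuousOn_mul (by fun_prop)

lemma integral_sq_exp_sub_exp_mul_rpow_neg_le (hl : 0 < l) (hst : s < t) (htt' : t ≤ t')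
    (hα0 : 0 ≤ α) (hα2 : α ≤ 2) (hβ0 : 0 ≤ β) (hβ1 : β < 1) :
    ∫ θ in s..t, (exp (-(l * (t - θ))) - exp (-(l * (t' - θ)))) ^ 2 * (θ - s) ^ (-β) ≤
      (2 ^ β + 2 / (1 - β)) / 2 * l ^ (α - 1) * ((t' - t) ^ α * (t - s) ^ (-β)) := by
  have hint : IntervalIntegrable (fun u : ℝ ↦ u ^ (-β)) volume 0 (t - s) :=
    intervalIntegral.intervalIntegrable_rpow' (by linarith)
  calc ∫ θ in s..t, (exp (-(l * (t - θ))) - exp (-(l * (t' - θ)))) ^ 2 * (θ - s) ^ (-β)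
      = ∫ u in (0 : ℝ)..(t - s),
          (exp (-(l * (t - s - u))) - exp (-(l * (t' - s - u)))) ^ 2 * u ^ (-β) := by
        have hshift := intervalIntegral.integral_comp_sub_right (a := s) (b := t) (fun u ↦
          (exp (-(l * (t - s - u))) - exp (-(l * (t' - s - u)))) ^ 2 * u ^ (-β)) s
        simpa only [sub_sub_sub_cancel_right, sub_self] using hshift
    _ ≤ ∫ u in (0 : ℝ)..(t - s),
          (l * (t' - t)) ^ α * (exp (-(2 * l * (t - s - u))) * u ^ (-β)) := by
        refine intervalIntegral.integral_mono_on_of_le_Ioo (sub_nonneg.2 hst.le)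
          (hint.continuousOn_mul (by fun_prop))
          ((hint.continuousOn_mul (by fun_prop)).const_mul _) fun u hu ↦ ?_
        rw [← mul_assoc]
        refine mul_le_mul_of_nonneg_right ?_ (rpow_nonneg hu.1.le _)
        have hincrement := sq_exp_sub_exp_le (τ := t - s - u) (τ' := t' - s - u) hl.le
          (by linarith) hα0 hα2
        simpa only [sub_sub_sub_cancel_right] using hincrement
    _ ≤ (l * (t' - t)) ^ α * ((2 ^ β + 2 / (1 - β)) * (2 * l)⁻¹ * (t - s) ^ (-β)) := by
        rw [intervalIntegral.integral_const_mul]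
        refine mul_le_mul_of_nonneg_left ?_
          (rpow_nonneg (mul_nonneg hl.le (sub_nonneg.2 htt')) _)
        exact integral_exp_mul_rpow_neg_le (by positivity) (sub_pos.2 hst) hβ0 hβ1
    _ = _ := by
        rw [mul_rpow hl.le (sub_nonneg.2 htt'), rpow_sub_one hl.ne']
        ring

end TimeIntegral

section CosineSeries

lemma integral_cos_int_mul_pi_mul (n : ℤ) :
    ∫ r in (0 : ℝ)..1, cos (n * π * r) = if n = 0 then 1 else 0 := by
  split_ifs with hn
  · simp [hn]
  · have hnπ : (n : ℝ) * π ≠ 0 := mul_ne_zero (Int.cast_ne_zero.2 hn) pi_ne_zero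
    rw [intervalIntegral.integral_comp_mul_left cos hnπ, integral_cos]
    simp [sin_int_mul_pi]

lemma integral_cos_succ_mul_pi_mul_cos_succ_mul_pi (j k : ℕ) :
    ∫ r in (0 : ℝ)..1, cos ((j + 1) * π * r) * cos ((k + 1) * π * r) =
      if j = k then 1 / 2 else 0 := by
  have hprod (r : ℝ) : cos ((j + 1) * π * r) * cos ((k + 1) * π * r) =
      2⁻¹ * (cos (((j - k : ℤ) : ℝ) * π * r) + cos (((j + k + 2 : ℤ) : ℝ) * π * r)) := by
    have h := two_mul_cos_mul_cos ((j + 1) * π * r) ((k + 1) * π * r)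
    push_cast
    rw [← sub_mul, ← sub_mul, ← add_mul, ← add_mul] at h
    ring_nf at h ⊢
    linarith
  simp_rw [hprod]
  rw [intervalIntegral.integral_const_mul,
    intervalIntegral.integral_add (Continuous.intervalIntegrable (by fun_prop) _ _)
      (Continuous.intervalIntegrable (by fun_prop) _ _),
    integral_cos_int_mul_pi_mul, integral_cos_int_mul_pi_mul,
    if_neg (show (j + k + 2 : ℤ) ≠ 0 by omega)]
  simp only [sub_eq_zero, Nat.cast_inj]
  split_ifs <;> norm_num

lemma integral_sq_sum_mul_cos (c : ℕ → ℝ) (S : Finset ℕ) :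
    ∫ r in (0 : ℝ)..1, (∑ k ∈ S, c k * cos ((k + 1) * π * r)) ^ 2 = ∑ k ∈ S, c k ^ 2 / 2 := by
  have hexpand (r : ℝ) : (∑ k ∈ S, c k * cos ((k + 1) * π * r)) ^ 2 =
      ∑ j ∈ S, ∑ k ∈ S, c j * c k * (cos ((j + 1) * π * r) * cos ((k + 1) * π * r)) := by
    rw [sq, Finset.sum_mul_sum]
    exact Finset.sum_congr rfl fun j _ ↦ Finset.sum_congr rfl fun k _ ↦ by ring
  simp_rw [hexpand]
  rw [intervalIntegral.integral_finsetSum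
    fun j _ ↦ Continuous.intervalIntegrable (by fun_prop) _ _]
  refine Finset.sum_congr rfl fun j hj ↦ ?_
  rw [intervalIntegral.integral_finsetSum
    fun k _ ↦ Continuous.intervalIntegrable (by fun_prop) _ _]
  simp only [intervalIntegral.integral_const_mul, integral_cos_succ_mul_pi_mul_cos_succ_mul_pi,
    mul_ite, mul_zero, Finset.sum_ite_eq, if_pos hj]
  ring

lemma abs_mul_cos_le (a y : ℝ) : |a * cos y| ≤ |a| := by
  rw [abs_mul]
  exact mul_le_of_le_one_right (abs_nonneg a) (abs_cos_le_one y)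

lemma hasSum_integral_sq_tsum_mul_cos {c : ℕ → ℝ} (hc : Summable fun k ↦ |c k|) :
    HasSum (fun k ↦ c k ^ 2 / 2)
      (∫ r in (0 : ℝ)..1, (∑' k, c k * cos ((k + 1) * π * r)) ^ 2) := by
  have hsummable (r : ℝ) : Summable fun k : ℕ ↦ c k * cos ((k + 1) * π * r) :=
    hc.of_norm_bounded fun k ↦ abs_mul_cos_le _ _
  simp only [HasSum, ← integral_sq_sum_mul_cos]
  refine intervalIntegral.tendsto_integral_filter_of_dominated_convergence
    (fun _ ↦ (∑' k, |c k|) ^ 2) ?_ ?_ intervalIntegrable_const ?_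
  · exact .of_forall fun S ↦ Continuous.aestronglyMeasurable (by fun_prop)
  · refine .of_forall fun S ↦ .of_forall fun r _ ↦ ?_
    rw [norm_pow]
    gcongr
    calc ‖∑ k ∈ S, c k * cos ((k + 1) * π * r)‖
        ≤ ∑ k ∈ S, |c k| := norm_sum_le_of_le _ fun k _ ↦ abs_mul_cos_le _ _
      _ ≤ ∑' k, |c k| := hc.sum_le_tsum _ fun _ _ ↦ abs_nonneg _
  · exact .of_forall fun r _ ↦ (hsummable r).hasSum.pow 2

end CosineSeries

section Kernel

/-- The eigenvalue of `∂_x⁴ - ρ∂_x²` on `[0,1]` with Neumann boundary conditions for the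
eigenfunction `x ↦ cos ((k + 1)πx)`. As in `Hker`, the index is shifted so as to omit the constant
eigenfunction. -/
noncomputable def neumannEigenvalue (ρ : ℝ) (k : ℕ) : ℝ :=
  (k + 1 : ℝ) ^ 4 * π ^ 4 + ρ * (k + 1 : ℝ) ^ 2 * π ^ 2

variable {ρ τ τ' : ℝ}

lemma neumannEigenvalue_mono (k : ℕ) : Monotone fun ρ ↦ neumannEigenvalue ρ k := by
  intro ρ₁ ρ₂ hρ
  simp only [neumannEigenvalue]
  gcongr

lemma mul_succ_pow_four_le_neumannEigenvalue (ρ : ℝ) (k : ℕ) :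
    π ^ 2 * (π ^ 2 + min ρ 0) * (k + 1 : ℝ) ^ 4 ≤ neumannEigenvalue ρ k := by
  have hk : (1 : ℝ) ≤ (k + 1) ^ 2 := one_le_pow₀ (by simp)
  have hmin : min ρ 0 * (k + 1) ^ 2 ≤ ρ :=
    (mul_le_of_one_le_right (min_le_right ρ 0) hk).trans (min_le_left ρ 0)
  calc π ^ 2 * (π ^ 2 + min ρ 0) * (k + 1 : ℝ) ^ 4
      = (k + 1 : ℝ) ^ 4 * π ^ 4 + min ρ 0 * (k + 1) ^ 2 * (k + 1) ^ 2 * π ^ 2 := by ring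
    _ ≤ neumannEigenvalue ρ k := by
        unfold neumannEigenvalue
        gcongr

lemma pi_sq_mul_pi_sq_add_min_pos (hρ : -π ^ 2 < ρ) : 0 < π ^ 2 * (π ^ 2 + min ρ 0) := by
  have hπ : 0 < π ^ 2 := by positivity
  have hmin : -π ^ 2 < min ρ 0 := lt_min hρ (neg_lt_zero.2 hπ)
  exact mul_pos hπ (by linarith)

lemma neumannEigenvalue_pos (hρ : -π ^ 2 < ρ) (k : ℕ) : 0 < neumannEigenvalue ρ k :=
  (mul_pos (pi_sq_mul_pi_sq_add_min_pos hρ) (by positivity)).trans_le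
    (mul_succ_pow_four_le_neumannEigenvalue ρ k)

lemma summable_neumannEigenvalue_rpow (hρ : -π ^ 2 < ρ) {γ : ℝ} (hγ : γ < -(1 / 4)) :
    Summable fun k ↦ neumannEigenvalue ρ k ^ γ := by
  set c := π ^ 2 * (π ^ 2 + min ρ 0)
  have hc : 0 < c := pi_sq_mul_pi_sq_add_min_pos hρ
  have hseries : Summable fun k : ℕ ↦ ((k + 1 : ℕ) : ℝ) ^ (4 * γ) :=
    (summable_nat_add_iff 1).2 (summable_nat_rpow.2 (by linarith))
  refine (hseries.mul_left (c ^ γ)).of_nonneg_of_le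
    (fun k ↦ rpow_nonneg (neumannEigenvalue_pos hρ k).le _) fun k ↦ ?_
  calc neumannEigenvalue ρ k ^ γ ≤ (c * (k + 1 : ℝ) ^ 4) ^ γ :=
        rpow_le_rpow_of_nonpos (by positivity) (mul_succ_pow_four_le_neumannEigenvalue ρ k)
          (by linarith)
    _ = c ^ γ * ((k + 1 : ℕ) : ℝ) ^ (4 * γ) := by
        rw [mul_rpow hc.le (by positivity), rpow_mul (by positivity)]
        norm_cast

lemma summable_exp_neg_neumannEigenvalue_mul (hρ : -π ^ 2 < ρ) (hτ : 0 < τ) :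
    Summable fun k ↦ exp (-(neumannEigenvalue ρ k * τ)) := by
  have hinv := summable_neumannEigenvalue_rpow hρ (γ := -1) (by norm_num)
  refine (hinv.mul_right τ⁻¹).of_nonneg_of_le (fun k ↦ (exp_pos _).le) fun k ↦ ?_
  rw [rpow_neg_one, ← mul_inv]
  exact exp_neg_le_inv (mul_pos (neumannEigenvalue_pos hρ k) hτ)

lemma summable_Hker_series (hρ : -π ^ 2 < ρ) (hτ : 0 < τ) (x r : ℝ) :
    Summable fun k : ℕ ↦ exp (-(neumannEigenvalue ρ k * τ)) *
      cos ((k + 1) * π * x) * cos ((k + 1) * π * r) :=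
  (summable_exp_neg_neumannEigenvalue_mul hρ hτ).of_norm_bounded fun _ ↦
    (abs_mul_cos_le _ _).trans <| (abs_mul_cos_le _ _).trans_eq (abs_exp _)

lemma Hker_sub_Hker_eq_tsum (hρ : -π ^ 2 < ρ) (hτ : 0 < τ) (hτ' : 0 < τ') (x r : ℝ) :
    Hker ρ τ x r - Hker ρ τ' x r =
      ∑' k : ℕ, 2 * (exp (-(neumannEigenvalue ρ k * τ)) - exp (-(neumannEigenvalue ρ k * τ'))) *
        cos ((k + 1) * π * x) * cos ((k + 1) * π * r) := by
  have hHker (σ : ℝ) : Hker ρ σ x r = 1 + 2 * ∑' k : ℕ, exp (-(neumannEigenvalue ρ k * σ)) *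
      cos ((k + 1) * π * x) * cos ((k + 1) * π * r) := rfl
  rw [hHker, hHker, add_sub_add_left_eq_sub, ← mul_sub,
    ← (summable_Hker_series hρ hτ x r).tsum_sub (summable_Hker_series hρ hτ' x r),
    ← tsum_mul_left]
  exact tsum_congr fun k ↦ by ring

lemma hasSum_integral_sq_Hker_sub (hρ : -π ^ 2 < ρ) (hτ : 0 < τ) (hτ' : 0 < τ') (x : ℝ) :
    HasSum
      (fun k : ℕ ↦ 2 * cos ((k + 1) * π * x) ^ 2 *
        (exp (-(neumannEigenvalue ρ k * τ)) - exp (-(neumannEigenvalue ρ k * τ'))) ^ 2)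
      (∫ r in (0 : ℝ)..1, (Hker ρ τ x r - Hker ρ τ' x r) ^ 2) := by
  simp_rw [Hker_sub_Hker_eq_tsum hρ hτ hτ' x]
  have hcoeff : Summable fun k : ℕ ↦ |2 * (exp (-(neumannEigenvalue ρ k * τ)) -
      exp (-(neumannEigenvalue ρ k * τ'))) * cos ((k + 1) * π * x)| :=
    (((summable_exp_neg_neumannEigenvalue_mul hρ hτ).sub
      (summable_exp_neg_neumannEigenvalue_mul hρ hτ')).mul_left 2).abs.of_nonneg_of_le
      (fun _ ↦ abs_nonneg _) fun _ ↦ abs_mul_cos_le _ _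
  convert hasSum_integral_sq_tsum_mul_cos hcoeff using 2
  ring

/-- The contribution of the eigenfunction `y ↦ cos ((k + 1)πy)` to
`∫₀¹ (H_{t-θ}(x,r) - H_{t'-θ}(x,r))² (θ-s)^{-β} dr`, where the factor `2` comes from normalising
the kernel and the eigenfunctions. -/
noncomputable def weightedIncrementMode (ρ β s t t' x : ℝ) (k : ℕ) (θ : ℝ) : ℝ :=
  2 * cos ((k + 1) * π * x) ^ 2 * ((exp (-(neumannEigenvalue ρ k * (t - θ))) -
    exp (-(neumannEigenvalue ρ k * (t' - θ)))) ^ 2 * (θ - s) ^ (-β))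

variable {s t t' α β : ℝ}

lemma weightedIncrementMode_nonneg {θ : ℝ} (hθ : s ≤ θ) (ρ β t t' x : ℝ) (k : ℕ) :
    0 ≤ weightedIncrementMode ρ β s t t' x k θ :=
  mul_nonneg (by positivity) (mul_nonneg (sq_nonneg _) (rpow_nonneg (sub_nonneg.2 hθ) _))

lemma intervalIntegrable_weightedIncrementMode (hβ : β < 1) (ρ s t t' x : ℝ) (k : ℕ) :
    IntervalIntegrable (weightedIncrementMode ρ β s t t' x k) volume s t :=
  (intervalIntegrable_sq_exp_sub_exp_mul_rpow_neg hβ).const_mul _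

lemma integral_weightedIncrementMode_le (hρ : -π ^ 2 < ρ) (hst : s < t) (htt' : t ≤ t')
    (hα0 : 0 ≤ α) (hα2 : α ≤ 2) (hβ0 : 0 ≤ β) (hβ1 : β < 1) (x : ℝ) (k : ℕ) :
    ∫ θ in s..t, weightedIncrementMode ρ β s t t' x k θ ≤
      (2 ^ β + 2 / (1 - β)) * ((t' - t) ^ α * (t - s) ^ (-β)) *
        neumannEigenvalue ρ k ^ (α - 1) := by
  have hmode := integral_sq_exp_sub_exp_mul_rpow_neg_le (neumannEigenvalue_pos hρ k) hst htt'
    hα0 hα2 hβ0 hβ1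
  have hnonneg : 0 ≤ ∫ θ in s..t, (exp (-(neumannEigenvalue ρ k * (t - θ))) -
      exp (-(neumannEigenvalue ρ k * (t' - θ)))) ^ 2 * (θ - s) ^ (-β) :=
    intervalIntegral.integral_nonneg hst.le fun θ hθ ↦
      mul_nonneg (sq_nonneg _) (rpow_nonneg (sub_nonneg.2 hθ.1) _)
  have hcos : 2 * cos ((k + 1) * π * x) ^ 2 ≤ 2 :=
    mul_le_of_le_one_right zero_le_two (cos_sq_le_one _)
  simp only [weightedIncrementMode]
  rw [intervalIntegral.integral_const_mul]
  exact (mul_le_mul hcos hmode hnonneg zero_le_two).trans_eq (by ring)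

lemma integral_sq_Hker_sub_mul_rpow_neg {θ : ℝ} (hρ : -π ^ 2 < ρ) (hθ : θ < t) (hθ' : θ < t')
    (β s x : ℝ) :
    ∫ r in (0 : ℝ)..1, (Hker ρ (t - θ) x r - Hker ρ (t' - θ) x r) ^ 2 * (θ - s) ^ (-β) =
      ∑' k, weightedIncrementMode ρ β s t t' x k θ := by
  have hsum := hasSum_integral_sq_Hker_sub hρ (sub_pos.2 hθ) (sub_pos.2 hθ') x
  simp only [weightedIncrementMode, intervalIntegral.integral_mul_const, ← mul_assoc,
    tsum_mul_right, hsum.tsum_eq]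

lemma hasSum_integral_weightedIncrementMode (hρ : -π ^ 2 < ρ) (hst : s < t) (htt' : t ≤ t')
    (hβ0 : 0 ≤ β) (hβ1 : β < 1) (x : ℝ) :
    HasSum (fun k ↦ ∫ θ in s..t, weightedIncrementMode ρ β s t t' x k θ)
      (∫ θ in s..t, ∫ r in (0 : ℝ)..1,
        (Hker ρ (t - θ) x r - Hker ρ (t' - θ) x r) ^ 2 * (θ - s) ^ (-β)) := by
  have hnorm (k : ℕ) : ∫ θ in Set.Ioc s t, ‖weightedIncrementMode ρ β s t t' x k θ‖ =
      ∫ θ in s..t, weightedIncrementMode ρ β s t t' x k θ := by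
    rw [intervalIntegral.integral_of_le hst.le]
    exact setIntegral_congr_fun measurableSet_Ioc fun θ hθ ↦
      norm_of_nonneg (weightedIncrementMode_nonneg hθ.1.le ρ β t t' x k)
  have hsummable :
      Summable fun k ↦ ∫ θ in Set.Ioc s t, ‖weightedIncrementMode ρ β s t t' x k θ‖ := by
    have hmajorant := summable_neumannEigenvalue_rpow hρ (γ := 0 - 1) (by norm_num)
    refine .of_nonneg_of_le (fun k ↦ integral_nonneg fun θ ↦ norm_nonneg _) (fun k ↦ ?_)
      (hmajorant.mul_left ((2 ^ β + 2 / (1 - β)) * ((t' - t) ^ (0 : ℝ) * (t - s) ^ (-β))))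
    rw [hnorm]
    exact integral_weightedIncrementMode_le hρ hst htt' le_rfl zero_le_two hβ0 hβ1 x k
  rw [intervalIntegral.integral_congr_Ioo_of_le hst.le fun θ hθ ↦
    integral_sq_Hker_sub_mul_rpow_neg hρ hθ.2 (hθ.2.trans_le htt') β s x]
  simp only [intervalIntegral.integral_of_le hst.le]
  exact hasSum_integral_of_summable_integral_norm
    (fun k ↦ (intervalIntegrable_weightedIncrementMode hβ1 ρ s t t' x k).1) hsummable

end Kernel

theorem fourth_order_kernel_weighted_time_increment_general {ρ₀ α β : ℝ} (hρ₀ : -π ^ 2 < ρ₀)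
    (hα0 : 0 ≤ α) (hα1 : α < 3 / 4) (hβ0 : 0 ≤ β) (hβ1 : β < 1) :
    ∃ C : ℝ, 0 < C ∧ ∀ ρ s t t' x : ℝ, ρ₀ ≤ ρ → s < t → t ≤ t' →
      (∫ θ in s..t, ∫ r in (0 : ℝ)..1,
          (Hker ρ (t - θ) x r - Hker ρ (t' - θ) x r) ^ 2 * (θ - s) ^ (-β)) ≤
        C * |t - t'| ^ α * (t - s) ^ (-β) := by
  have hsum := summable_neumannEigenvalue_rpow hρ₀ (γ := α - 1) (by linarith)
  have hpos (k : ℕ) : 0 < neumannEigenvalue ρ₀ k ^ (α - 1) :=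
    rpow_pos_of_pos (neumannEigenvalue_pos hρ₀ k) _
  have hK : 0 < 2 ^ β + 2 / (1 - β) := add_pos (by positivity) (div_pos two_pos (sub_pos.2 hβ1))
  refine ⟨(2 ^ β + 2 / (1 - β)) * ∑' k, neumannEigenvalue ρ₀ k ^ (α - 1),
    mul_pos hK (hsum.tsum_pos (fun k ↦ (hpos k).le) 0 (hpos 0)),
    fun ρ s t t' x hρ hst htt' ↦ ?_⟩
  have hρπ : -π ^ 2 < ρ := hρ₀.trans_le hρ
  have hscale : 0 ≤ (t' - t) ^ α * (t - s) ^ (-β) :=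
    mul_nonneg (rpow_nonneg (sub_nonneg.2 htt') α) (rpow_nonneg (sub_nonneg.2 hst.le) (-β))
  have hmode_le (k : ℕ) : ∫ θ in s..t, weightedIncrementMode ρ β s t t' x k θ ≤
      (2 ^ β + 2 / (1 - β)) * ((t' - t) ^ α * (t - s) ^ (-β)) *
        neumannEigenvalue ρ₀ k ^ (α - 1) :=
    (integral_weightedIncrementMode_le hρπ hst htt' hα0 (by linarith) hβ0 hβ1 x k).trans <|
      mul_le_mul_of_nonneg_left (rpow_le_rpow_of_nonpos (neumannEigenvalue_pos hρ₀ k)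
        (neumannEigenvalue_mono k hρ) (by linarith)) (mul_nonneg hK.le hscale)
  rw [abs_sub_comm, abs_of_nonneg (sub_nonneg.2 htt')]
  exact (hasSum_le hmode_le (hasSum_integral_weightedIncrementMode hρπ hst htt' hβ0 hβ1 x)
    (hsum.hasSum.mul_left _)).trans_eq (by ring)

theorem fourth_order_kernel_weighted_time_increment (ρ : ℝ) (hρ : 0 ≤ ρ)
    (α : ℝ) (hα0 : 0 < α) (hα1 : α < 3 / 4) :
    ∃ C : ℝ, 0 < C ∧ ∀ s t t' x : ℝ, 0 ≤ s → s < t → t ≤ t' →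
      x ∈ Set.Icc (0 : ℝ) 1 →
      (∫ θ in s..t, ∫ r in (0 : ℝ)..1,
          (Hker ρ (t - θ) x r - Hker ρ (t' - θ) x r) ^ 2 * (θ - s) ^ (-(1/2) : ℝ)) ≤
        C * |t - t'| ^ α / Real.sqrt (t - s) := by
  obtain ⟨C, hC, hbound⟩ := fourth_order_kernel_weighted_time_increment_general (β := 1 / 2)
    (lt_of_lt_of_le (neg_lt_zero.2 (by positivity)) hρ) hα0.le hα1 (by norm_num) (by norm_num)
  refine ⟨C, hC, fun s t t' x _ hst htt' _ ↦ (hbound ρ s t t' x le_rfl hst htt').trans_eq ?_⟩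
  rw [rpow_neg (sub_nonneg.2 hst.le), ← sqrt_eq_rpow, div_eq_mul_inv]
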